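/- arXiv:2508.14269 — 2 statements merged into one kernel-verified Lean document; each statement's English description precedes it below -/
import Mathlib

section
/- Let k ≥ 4 log₂ n. If the rooted graph J[W,Z] (on an n-vertex ground set) contains no k-sunflower and no vertex of Z \ W is isolated in J[W,Z], then aut(W,Z) ≤ (16k)^{e(W,Z)}. -/
open SimpleGraph

/-- Expected number of copies of `F` in `G(n,p)`: `(n)_{v_F} p^{e_F} / aut(F)`. -/
noncomputable def expCount (n : ℕ) (p : ℝ) {β : Type} [Fintype β] (F : SimpleGraph β) : ℝ :=
  (n.descFactorial (Fintype.card β)) * p ^ (Nat.card F.edgeSet) / (Nat.card (F ≃g F))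

/-- `J` is `q`-sparse (w.r.t. ground-set size `n`): every subgraph `I ⊆ J` has
`(n)_{v_I} q^{e_I} / aut(I) ≥ 1`. -/
def ExpSparse (n : ℕ) (q : ℝ) {β : Type} (J : SimpleGraph β) : Prop :=
  ∀ I : J.Subgraph, 1 ≤ (n.descFactorial (Nat.card I.verts)) * q ^ (Nat.card I.edgeSet) /
      (Nat.card (I.coe ≃g I.coe))

/-- `N(H,F)`: the number of subgraphs of `H` isomorphic to `F`. -/
noncomputable def copyCount {α β : Type} (H : SimpleGraph α) (F : SimpleGraph β) : ℕ :=
  Nat.card {H' : H.Subgraph // Nonempty (F ≃g H'.coe)}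

/-- Edge set of the rooted graph `J[W,Z]`: edges of `J` inside `Z` not inside `W`. -/
def rootedEdges {V : Type} (J : SimpleGraph V) (W Z : Finset V) : Set (Sym2 V) :=
  {e | e ∈ J.edgeSet ∧ (∀ x ∈ e, x ∈ Z) ∧ ¬ ∀ x ∈ e, x ∈ W}

/-- `e(W,Z)`: the number of edges of `J[W,Z]`. -/
noncomputable def eWZ {V : Type} (J : SimpleGraph V) (W Z : Finset V) : ℕ :=
  Nat.card (rootedEdges J W Z)

/-- `aut(W,Z)`: the number of automorphisms of `J[W,Z]` fixing `W` pointwise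
(realized as permutations of the ground set fixing everything outside `Z`). -/
noncomputable def autWZ {V : Type} (J : SimpleGraph V) (W Z : Finset V) : ℕ :=
  Nat.card {σ : Equiv.Perm V // (∀ v ∈ W, σ v = v) ∧ (∀ v, v ∉ Z → σ v = v) ∧
     ∀ e, e ∈ rootedEdges J W Z ↔ Sym2.map σ e ∈ rootedEdges J W Z}

/-- `μ_p(W,Z) = n^{v(W,Z)} p^{e(W,Z)} / aut(W,Z)`. -/
noncomputable def mu {V : Type} [DecidableEq V] (n : ℕ) (p : ℝ) (J : SimpleGraph V)
    (W Z : Finset V) : ℝ :=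
  (n : ℝ) ^ ((Z \ W).card) * p ^ (eWZ J W Z) / (autWZ J W Z)

/-- `J[W,Z]` is `p`-leading: `μ_p(Y,Z) < 1` for all `W ⊊ Y ⊊ Z`. -/
def Leading {V : Type} [DecidableEq V] (n : ℕ) (p : ℝ) (J : SimpleGraph V)
    (W Z : Finset V) : Prop :=
  ∀ Y : Finset V, W ⊂ Y → Y ⊂ Z → mu n p J Y Z < 1

/-- A `k`-sunflower in `J[W,Z]`: pairwise disjoint nonempty petals `P i ⊆ Z \ W`
with no edges between distinct petals, whose rooted graphs over the common
core `Z \ ∪ P` are pairwise isomorphic fixing the core pointwise. -/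
def IsSunflower {V : Type} [DecidableEq V] (J : SimpleGraph V) (W Z : Finset V)
    {k : ℕ} (P : Fin k → Finset V) : Prop :=
  (∀ i, (P i).Nonempty ∧ P i ⊆ Z \ W) ∧
  (∀ i j, i ≠ j → Disjoint (P i) (P j)) ∧
  (∀ i j, i ≠ j → ∀ u ∈ P i, ∀ v ∈ P j, ¬ J.Adj u v) ∧
  (∀ i j : Fin k, ∃ σ : Equiv.Perm V,
     (∀ v ∈ Z \ (Finset.univ.biUnion P), σ v = v) ∧
     (P i).image σ = P j ∧
     (∀ e, e ∈ rootedEdges J (Z \ Finset.univ.biUnion P) ((Z \ Finset.univ.biUnion P) ∪ P i)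
        ↔ Sym2.map σ e ∈ rootedEdges J (Z \ Finset.univ.biUnion P) ((Z \ Finset.univ.biUnion P) ∪ P j)))


namespace SunflowerAut

open Finset Classical

/-- The rooted graph `J[W,Z]` as a simple graph. -/
def rg {V : Type} (J : SimpleGraph V) (W Z : Finset V) : SimpleGraph V where
  Adj a b := J.Adj a b ∧ a ∈ Z ∧ b ∈ Z ∧ ¬ (a ∈ W ∧ b ∈ W)
  symm := ⟨fun a b h => ⟨h.1.symm, h.2.2.1, h.2.1, fun h' => h.2.2.2 ⟨h'.2, h'.1⟩⟩⟩
  loopless := ⟨fun a h => h.1.ne rfl⟩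

lemma mem_rootedEdges {V : Type} (J : SimpleGraph V) (W Z : Finset V) (a b : V) :
    s(a, b) ∈ rootedEdges J W Z ↔ (rg J W Z).Adj a b := by
  simp [rootedEdges, rg]
  tauto

lemma edgeSet_rg {V : Type} (J : SimpleGraph V) (W Z : Finset V) :
    (rg J W Z).edgeSet = rootedEdges J W Z := by
  ext e
  induction e with
  | _ a b => rw [mem_rootedEdges]; rfl

/-- The graph induced outside `Y`. -/
def outG {V : Type} (G : SimpleGraph V) (Y : Finset V) : SimpleGraph V where
  Adj a b := G.Adj a b ∧ a ∉ Y ∧ b ∉ Y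
  symm := ⟨fun a b h => ⟨h.1.symm, h.2.2, h.2.1⟩⟩
  loopless := ⟨fun a h => h.1.ne rfl⟩

/-- Admissible permutations: fix everything outside `Z`, preserve `G`, and fix `S`. -/
noncomputable def afix {V : Type} [Fintype V] (G : SimpleGraph V) (Z S : Finset V) :
    Finset (Equiv.Perm V) :=
  univ.filter fun σ => (∀ v, v ∉ Z → σ v = v) ∧ (∀ a b, G.Adj a b ↔ G.Adj (σ a) (σ b)) ∧
    ∀ v ∈ S, σ v = v

/-- Number of edges of `G` not inside `S`. -/
noncomputable def eout {V : Type} [Fintype V] (G : SimpleGraph V) (S : Finset V) : ℕ :=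
  (G.edgeFinset.filter fun e => ¬ ∀ x ∈ e, x ∈ S).card

/-- Vertices reachable from `v` outside `Y`. -/
noncomputable def comp {V : Type} [Fintype V] (G : SimpleGraph V) (Y : Finset V) (v : V) :
    Finset V := univ.filter fun u => (outG G Y).Reachable v u

variable {V : Type} [Fintype V] [DecidableEq V] {G : SimpleGraph V} {Z S Y : Finset V}

lemma mem_afix {σ : Equiv.Perm V} : σ ∈ afix G Z S ↔
    (∀ v, v ∉ Z → σ v = v) ∧ (∀ a b, G.Adj a b ↔ G.Adj (σ a) (σ b)) ∧ ∀ v ∈ S, σ v = v := by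
  simp [afix]

lemma afix_inv {σ : Equiv.Perm V} (h : σ ∈ afix G Z S) : σ⁻¹ ∈ afix G Z S := by
  rw [mem_afix] at h ⊢
  obtain ⟨h1, h2, h3⟩ := h
  refine ⟨fun v hv => ?_, fun a b => ?_, fun v hv => ?_⟩
  · rw [Equiv.Perm.inv_eq_iff_eq, h1 v hv]
  · rw [h2 (σ⁻¹ a)]; simp
  · rw [Equiv.Perm.inv_eq_iff_eq, h3 v hv]

lemma afix_mul {σ τ : Equiv.Perm V} (h : σ ∈ afix G Z S) (h' : τ ∈ afix G Z S) :
    σ * τ ∈ afix G Z S := by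
  rw [mem_afix] at h h' ⊢
  obtain ⟨h1, h2, h3⟩ := h
  obtain ⟨g1, g2, g3⟩ := h'
  refine ⟨fun v hv => ?_, fun a b => ?_, fun v hv => ?_⟩
  · simp [g1 v hv, h1 v hv]
  · rw [g2, h2]; simp
  · simp [g3 v hv, h3 v hv]

lemma afix_mono {S T : Finset V} (h : S ⊆ T) : afix G Z T ⊆ afix G Z S := by
  intro σ hσ
  rw [mem_afix] at hσ ⊢
  exact ⟨hσ.1, hσ.2.1, fun v hv => hσ.2.2 v (h hv)⟩

/-- The orbit of `v` under the admissible permutations. -/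
noncomputable def orb (G : SimpleGraph V) (Z S : Finset V) (v : V) : Finset V :=
  (afix G Z S).image fun σ => σ v

lemma afix_card_le (v : V) :
    (afix G Z S).card ≤ (orb G Z S v).card * (afix G Z (insert v S)).card := by
  rw [mul_comm]
  refine Finset.card_le_mul_card_image (f := fun σ : Equiv.Perm V => σ v) (afix G Z S) _ ?_
  intro w hw
  obtain ⟨σ0, h0, rfl⟩ := Finset.mem_image.1 hw
  refine Finset.card_le_card_of_injOn (fun σ => σ0⁻¹ * σ) ?_ ?_
  · intro σ hσ
    simp only [Finset.coe_filter, Set.mem_ofPred_eq] at hσ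
    have := afix_mul (afix_inv h0) hσ.1
    rw [Finset.mem_coe, mem_afix]
    rw [mem_afix] at this
    refine ⟨this.1, this.2.1, fun x hx => ?_⟩
    rcases Finset.mem_insert.1 hx with rfl | hx
    · simp [hσ.2]
    · exact this.2.2 x hx
  · intro a _ b _ h
    simpa using h

lemma eout_mono {S T : Finset V} (h : S ⊆ T) : eout G T ≤ eout G S := by
  apply Finset.card_le_card
  intro e he
  simp only [Finset.mem_filter] at he ⊢
  exact ⟨he.1, fun h' => he.2 fun x hx => h (h' x hx)⟩

lemma eout_insert {u v : V} (hu : u ∈ S) (hv : v ∉ S) (h : G.Adj u v) :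
    eout G (insert v S) + 1 ≤ eout G S := by
  apply Finset.card_lt_card
  rw [Finset.ssubset_iff_of_subset]
  · refine ⟨s(u, v), ?_, ?_⟩
    · simp [h, hu, hv]
    · simp [h, hu]
  · intro e he
    simp only [Finset.mem_filter] at he ⊢
    exact ⟨he.1, fun h' => he.2 fun x hx => Finset.mem_insert_of_mem (h' x hx)⟩

lemma out_adj {σ : Equiv.Perm V} (hσ : σ ∈ afix G Z S) (hY : Y ⊆ S) {a b : V}
    (h : (outG G Y).Adj a b) : (outG G Y).Adj (σ a) (σ b) := by
  rw [mem_afix] at hσ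
  have key : ∀ x, x ∉ Y → σ x ∉ Y := by
    intro x hx hx'
    have := hσ.2.2 _ (hY hx')
    have := σ.injective this
    rw [this] at hx'
    exact hx hx'
  exact ⟨(hσ.2.1 a b).1 h.1, key _ h.2.1, key _ h.2.2⟩

lemma comp_map {σ : Equiv.Perm V} (hσ : σ ∈ afix G Z S) (hY : Y ⊆ S) (v : V) :
    (comp G Y v).image σ = comp G Y (σ v) := by
  have key : ∀ τ ∈ afix G Z S, ∀ a b, (outG G Y).Reachable a b →
      (outG G Y).Reachable (τ a) (τ b) := by
    intro τ hτ a b h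
    exact h.map (⟨τ, fun {a b} h => out_adj hτ hY h⟩ : (outG G Y) →g (outG G Y))
  ext x
  simp only [comp, Finset.mem_image, Finset.mem_filter, Finset.mem_univ, true_and]
  constructor
  · rintro ⟨a, ha, rfl⟩
    exact key σ hσ _ _ ha
  · intro h
    refine ⟨σ⁻¹ x, ?_, by simp⟩
    simpa using key _ (afix_inv hσ) _ _ h

lemma mem_comp {v u : V} : u ∈ comp G Y v ↔ (outG G Y).Reachable v u := by simp [comp]

lemma comp_eq {v u : V} (h : u ∈ comp G Y v) : comp G Y u = comp G Y v := by
  ext x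
  rw [mem_comp] at h
  simp only [mem_comp]
  exact ⟨fun h' => h.trans h', fun h' => h.symm.trans h'⟩

lemma comp_sub {v u : V} (hv : v ∉ Y) (hZ : ∀ a b, G.Adj a b → a ∈ Z) (hvZ : v ∈ Z)
    (h : u ∈ comp G Y v) : u ∉ Y ∧ u ∈ Z := by
  rw [mem_comp] at h
  obtain ⟨p⟩ := h.symm
  cases p with
  | nil => exact ⟨hv, hvZ⟩
  | cons h _ => exact ⟨h.2.1, hZ _ _ h.1⟩

/-- Crossing edge. -/
lemma crossing {v b : V} {Q : Finset V} (hv : v ∈ Q) (hb : b ∉ Q) (h : b ∈ comp G Y v) :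
    ∃ x ∈ Q, ∃ y, y ∉ Q ∧ x ∈ comp G Y v ∧ y ∈ comp G Y v ∧ (outG G Y).Adj x y := by
  simp only [mem_comp] at h ⊢
  by_contra hcon
  push Not at hcon
  obtain ⟨p⟩ := h
  have : ∀ a c, (outG G Y).Walk a c → a ∈ Q → (outG G Y).Reachable v a → c ∈ Q := by
    intro a c p
    induction p with
    | nil => intro h _; exact h
    | cons hadj p ih =>
      rename_i x y z
      intro hx hr
      have hr' := hr.trans hadj.reachable
      apply ih _ hr'
      by_contra hy
      exact hcon x hx y hy hr hr' hadj
  exact hb (this _ _ p hv (Reachable.refl _))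

lemma grow {k : ℕ} {v : V} (hlow : ∀ u, u ∉ Y → u ∈ Z → (G.neighborFinset u).card ≤ k)
    (hZ : ∀ a b, G.Adj a b → a ∈ Z) :
    ∀ (m : ℕ) (Q : Finset V), v ∈ Q → Y ⊆ Q → (comp G Y v \ Q).card = m + 1 →
      (afix G Z Q).card ≤ k ^ m * (afix G Z (Q ∪ comp G Y v)).card ∧
      m + 1 + eout G (Q ∪ comp G Y v) ≤ eout G Q := by
  intro m
  induction m with
  | zero =>
    intro Q hv hY hc
    obtain ⟨b, hb⟩ := Finset.card_eq_one.1 hc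
    have hbm : b ∈ comp G Y v \ Q := by rw [hb]; simp
    rw [Finset.mem_sdiff] at hbm
    obtain ⟨x, hx, y, hy, hxc, hyc, hadj⟩ := crossing hv hbm.2 hbm.1
    have hyb : y = b := by
      have : y ∈ comp G Y v \ Q := by simp [hy, hyc]
      rw [hb] at this; simpa using this
    subst hyb
    have hQ : Q ∪ comp G Y v = insert y Q := by
      rw [← Finset.union_sdiff_self_eq_union, hb, Finset.union_comm]; rfl
    rw [hQ]
    refine ⟨?_, ?_⟩
    · refine (afix_card_le y).trans ?_
      gcongr
      rw [pow_zero]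
      have : Nonempty V := ⟨y⟩
      rw [Finset.card_le_one_iff_subset_singleton]
      refine ⟨y, ?_⟩
      rw [orb]
      intro z hz
      obtain ⟨σ, hσ, rfl⟩ := Finset.mem_image.1 hz
      have h1 := out_adj hσ hY hadj
      have hσ' := mem_afix.1 hσ
      rw [hσ'.2.2 x hx] at h1
      rw [← hb, Finset.mem_sdiff]
      refine ⟨?_, fun h => ?_⟩
      · rw [mem_comp] at hxc ⊢
        exact hxc.trans h1.reachable
      · have := σ.injective (hσ'.2.2 _ h)
        simp only [this] at h
        exact hy h
    · have := eout_insert hx hy hadj.1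
      omega
  | succ m ih =>
    intro Q hv hY hc
    have hne : (comp G Y v \ Q).Nonempty := by rw [← Finset.card_pos]; omega
    obtain ⟨b, hbm⟩ := hne
    rw [Finset.mem_sdiff] at hbm
    obtain ⟨x, hx, y, hy, hxc, hyc, hadj⟩ := crossing hv hbm.2 hbm.1
    have hc' : (comp G Y v \ insert y Q).card = m + 1 := by
      rw [Finset.sdiff_insert, Finset.card_erase_of_mem (by simp [hy, hyc]), hc]; rfl
    obtain ⟨i1, i2⟩ := ih (insert y Q) (Finset.mem_insert_of_mem hv)
      (hY.trans (Finset.subset_insert _ _)) hc'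
    have hQ : insert y Q ∪ comp G Y v = Q ∪ comp G Y v := by
      rw [Finset.insert_union, Finset.insert_eq_self.2]
      exact Finset.mem_union_right _ hyc
    rw [hQ] at i1 i2
    refine ⟨?_, ?_⟩
    · calc (afix G Z Q).card ≤ (orb G Z Q y).card * (afix G Z (insert y Q)).card := afix_card_le y
        _ ≤ k * (k ^ m * (afix G Z (Q ∪ comp G Y v)).card) := by
          gcongr
          refine le_trans (Finset.card_le_card ?_) (hlow x hadj.2.1 (hZ _ _ hadj.1))
          intro z hz
          obtain ⟨σ, hσ, rfl⟩ := Finset.mem_image.1 hz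
          have h1 := out_adj hσ hY hadj
          have hσ' := mem_afix.1 hσ
          rw [hσ'.2.2 x hx] at h1
          simpa using h1.1
        _ = _ := by ring
    · have := eout_insert hx hy hadj.1
      omega

/-- The orbit bound for a fresh component. -/
lemma orb_le {k : ℕ} {v : V} (hYS : Y ⊆ S)
    (hk : ((orb G Z S v).image (comp G Y)).card ≤ k) :
    (orb G Z S v).card ≤ k * (comp G Y v).card := by
  have h1 : orb G Z S v ⊆ ((orb G Z S v).image (comp G Y)).biUnion id := by
    intro x hx
    rw [Finset.mem_biUnion]
    exact ⟨comp G Y x, Finset.mem_image_of_mem _ hx, by simp [mem_comp]⟩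
  refine (Finset.card_le_card h1).trans ((Finset.card_biUnion_le_card_mul _ _ (comp G Y v).card ?_).trans
    (Nat.mul_le_mul_right _ hk))
  intro s hs
  obtain ⟨x, hx, rfl⟩ := Finset.mem_image.1 hs
  obtain ⟨σ, hσ, rfl⟩ := Finset.mem_image.1 hx
  simp only [id]
  rw [← comp_map hσ hYS]
  exact Finset.card_image_le

lemma main_low {k : ℕ} (hk1 : 1 ≤ k)
    (hlow : ∀ u, u ∉ Y → u ∈ Z → (G.neighborFinset u).card ≤ k)
    (hZ : ∀ a b, G.Adj a b → a ∈ Z)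
    (hiso : ∀ v ∈ Z, v ∉ Y → ∃ x, G.Adj v x)
    (hF : ∀ S v, Y ⊆ S → v ∈ Z → v ∉ Y → ((orb G Z S v).image (comp G Y)).card ≤ k) :
    ∀ (N : ℕ) (S : Finset V), (Z \ S).card ≤ N → Y ⊆ S →
      (∀ a ∈ S, ∀ b, (outG G Y).Adj a b → b ∈ S) →
      (afix G Z S).card ≤ (2 * k) ^ (eout G S) := by
  intro N
  induction N using Nat.strong_induction_on with
  | _ N ih =>
  intro S hN hYS hcl
  by_cases hZS : Z ⊆ S
  · have : (afix G Z S).card ≤ 1 := by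
      rw [Finset.card_le_one_iff_subset_singleton]
      refine ⟨1, fun σ hσ => ?_⟩
      rw [mem_afix] at hσ
      rw [Finset.mem_singleton]
      ext x
      by_cases hx : x ∈ Z
      · simpa using hσ.2.2 x (hZS hx)
      · simpa using hσ.1 x hx
    exact this.trans (Nat.one_le_pow _ _ (by omega))
  obtain ⟨v, hvZ, hvS⟩ := Finset.not_subset.1 hZS
  have hvY : v ∉ Y := fun h => hvS (hYS h)
  have hvC : v ∈ comp G Y v := by simp [mem_comp]
  have hreach : ∀ a c, (outG G Y).Walk a c → a ∈ S → c ∈ S := by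
    intro a c p
    induction p with
    | nil => exact id
    | cons hadj p ih' => intro h; exact ih' (hcl _ h _ hadj)
  have hdisj : Disjoint (comp G Y v) S := by
    rw [Finset.disjoint_left]
    intro a ha haS
    rw [mem_comp] at ha
    obtain ⟨p⟩ := ha.symm
    exact hvS (hreach _ _ p haS)
  have hcl' : ∀ a ∈ S ∪ comp G Y v, ∀ b, (outG G Y).Adj a b → b ∈ S ∪ comp G Y v := by
    intro a ha b hab
    rw [Finset.mem_union] at ha ⊢
    rcases ha with ha | ha
    · exact Or.inl (hcl a ha b hab)
    · right
      rw [mem_comp] at ha ⊢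
      exact ha.trans hab.reachable
  have hlt : (Z \ (S ∪ comp G Y v)).card < (Z \ S).card := by
    apply Finset.card_lt_card
    rw [Finset.ssubset_iff_of_subset (Finset.sdiff_subset_sdiff le_rfl Finset.subset_union_left)]
    exact ⟨v, by simp [hvZ, hvS], by simp [hvC]⟩
  have IH := ih _ (lt_of_lt_of_le hlt hN) (S ∪ comp G Y v) le_rfl
    (hYS.trans Finset.subset_union_left) hcl'
  have ho := (afix_card_le (G := G) (Z := Z) (S := S) v).trans
    (Nat.mul_le_mul_right _ (orb_le hYS (hF S v hYS hvZ hvY)))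
  have hU : insert v S ∪ comp G Y v = S ∪ comp G Y v := by
    rw [Finset.insert_union, Finset.insert_eq_self.2]
    exact Finset.mem_union_right _ hvC
  have hcard : (comp G Y v \ insert v S).card + 1 = (comp G Y v).card := by
    rw [Finset.sdiff_insert, Finset.sdiff_eq_self_of_disjoint hdisj]
    exact Finset.card_erase_add_one hvC
  rcases Nat.eq_zero_or_pos (comp G Y v \ insert v S).card with h0 | hpos
  · have hc1 : (comp G Y v).card = 1 := by omega
    obtain ⟨w, hw⟩ := Finset.card_eq_one.1 hc1
    have hwv : v = w := by rw [hw] at hvC; simpa using hvC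
    subst hwv
    obtain ⟨x, hx⟩ := hiso v hvZ hvY
    have hxY : x ∈ Y := by
      by_contra hxY
      have : x ∈ comp G Y v := by
        rw [mem_comp]
        exact Adj.reachable (G := outG G Y) ⟨hx, hvY, hxY⟩
      rw [hw, Finset.mem_singleton] at this
      subst this
      exact hx.ne rfl
    have he := eout_insert (hYS hxY) hvS hx.symm
    rw [← hU, hw] at IH
    have hU2 : insert v S ∪ {v} = insert v S := by simp
    rw [hU2] at IH
    rw [hc1, mul_one] at ho
    calc (afix G Z S).card ≤ k * (2 * k) ^ (eout G (insert v S)) :=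
          ho.trans (Nat.mul_le_mul_left _ IH)
      _ ≤ (2 * k) * (2 * k) ^ (eout G (insert v S)) := by gcongr; omega
      _ = (2 * k) ^ (eout G (insert v S) + 1) := by ring
      _ ≤ _ := Nat.pow_le_pow_right (by omega) he
  · obtain ⟨m, hm⟩ : ∃ m, (comp G Y v \ insert v S).card = m + 1 := ⟨_, (Nat.sub_add_cancel hpos).symm⟩
    obtain ⟨g1, g2⟩ := grow hlow hZ m (insert v S) (Finset.mem_insert_self _ _)
      (hYS.trans (Finset.subset_insert _ _)) hm
    rw [hU] at g1 g2
    have hc : (comp G Y v).card = m + 2 := by omega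
    have he : m + 1 + eout G (S ∪ comp G Y v) ≤ eout G S :=
      g2.trans (eout_mono (Finset.subset_insert _ _))
    have h2 : m + 2 ≤ 2 ^ (m + 1) := Nat.lt_two_pow_self (n := m + 1)
    rw [hc] at ho
    calc (afix G Z S).card
        ≤ k * (m + 2) * (k ^ m * (2 * k) ^ (eout G (S ∪ comp G Y v))) :=
          ho.trans (Nat.mul_le_mul_left _ (g1.trans (Nat.mul_le_mul_left _ IH)))
      _ ≤ k * 2 ^ (m + 1) * (k ^ m * (2 * k) ^ (eout G (S ∪ comp G Y v))) := by gcongr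
      _ = (2 * k) ^ (m + 1 + eout G (S ∪ comp G Y v)) := by rw [pow_add (2 * k), mul_pow 2 k]; ring
      _ ≤ _ := Nat.pow_le_pow_right (by omega) he

lemma main_high (W : Finset V) : ∀ T : Finset V,
    (afix G Z W).card ≤ (Fintype.card V) ^ T.card * (afix G Z (W ∪ T)).card := by
  intro T
  induction T using Finset.induction_on with
  | empty => simp
  | insert a T ha ih =>
    rw [Finset.card_insert_of_notMem ha, Finset.union_insert]
    refine ih.trans ?_
    rw [pow_succ, mul_assoc]
    apply Nat.mul_le_mul_left
    exact (afix_card_le a).trans (Nat.mul_le_mul_right _ (Finset.card_le_univ _))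

/-- Many components of one orbit give a sunflower. -/
lemma sunflower (J : SimpleGraph V) {W : Finset V} {k : ℕ} (hWY : W ⊆ Y)
    (hYZ : Y ⊆ Z) (hYS : Y ⊆ S) {v : V} (hvZ : v ∈ Z) (hvY : v ∉ Y)
    (hk : k ≤ ((orb (rg J W Z) Z S v).image (comp (rg J W Z) Y)).card) :
    ∃ P : Fin k → Finset V, IsSunflower J W Z P := by
  set G := rg J W Z with hG
  obtain ⟨F, hFsub, hFc⟩ := Finset.exists_subset_card_eq hk
  let eqv := (Finset.equivFinOfCardEq hFc).symm
  have hmem : ∀ i : Fin k, ∃ σ ∈ afix G Z S, comp G Y (σ v) = (eqv i).1 := by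
    intro i
    have := hFsub (eqv i).2
    obtain ⟨x, hx, hxe⟩ := Finset.mem_image.1 this
    obtain ⟨σ, hσ, rfl⟩ := Finset.mem_image.1 hx
    exact ⟨σ, hσ, hxe⟩
  choose f hf hfe using hmem
  let P : Fin k → Finset V := fun i => comp G Y (f i v)
  have hinj : ∀ i j, i ≠ j → P i ≠ P j := by
    intro i j hij h
    apply hij
    simp only [P, hfe] at h
    exact eqv.injective (Subtype.ext h)
  have hGZ : ∀ a b, G.Adj a b → a ∈ Z := fun a b h => h.2.1
  have hvi : ∀ i, f i v ∉ Y ∧ f i v ∈ Z := by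
    intro i
    have h := mem_afix.1 (hf i)
    constructor
    · intro h'
      have := (f i).injective (h.2.2 _ (hYS h'))
      rw [this] at h'
      exact hvY h'
    · by_contra h'
      have := (f i).injective (h.1 _ h')
      rw [this] at h'
      exact h' hvZ
  have hPsub : ∀ i x, x ∈ P i → x ∉ Y ∧ x ∈ Z := fun i x hx =>
    comp_sub (hvi i).1 hGZ (hvi i).2 hx
  have hdisj : ∀ i j, i ≠ j → Disjoint (P i) (P j) := by
    intro i j hij
    rw [Finset.disjoint_left]
    intro x hx hx'
    exact hinj i j hij ((comp_eq hx).symm.trans (comp_eq hx'))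
  have hnb : ∀ i u w, u ∈ P i → J.Adj u w → w ∈ Z → w ∉ Y → w ∈ P i := by
    intro i u w hu huw hwZ hwY
    have h1 := hPsub i u hu
    have hu' := hu
    simp only [P, mem_comp] at hu' ⊢
    refine hu'.trans (Adj.reachable (G := outG G Y) ⟨⟨huw, h1.2, hwZ, fun h => h1.1 (hWY h.1)⟩, h1.1, hwY⟩)
  refine ⟨P, ?_, hdisj, ?_, ?_⟩
  · intro i
    refine ⟨⟨f i v, by simp [P, mem_comp]⟩, fun x hx => ?_⟩
    have := hPsub i x hx
    rw [Finset.mem_sdiff]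
    exact ⟨this.2, fun h => this.1 (hWY h)⟩
  · intro i j hij u hu w hw hadj
    have hw' := hPsub j w hw
    exact Finset.disjoint_left.1 (hdisj i j hij) (hnb i u w hu hadj hw'.2 hw'.1) hw
  · intro i j
    by_cases hij : i = j
    · subst hij
      refine ⟨1, by simp, by simp, fun e => ?_⟩
      have : Sym2.map (⇑(1 : Equiv.Perm V)) e = e := by
        rw [Equiv.Perm.coe_one, Sym2.map_id]; rfl
      rw [this]
    · let τ := f j * (f i)⁻¹
      have hτ : τ ∈ afix G Z S := afix_mul (hf j) (afix_inv (hf i))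
      have hτi : (P i).image τ = P j := by
        have := comp_map (Y := Y) hτ hYS (f i v)
        simpa [P, τ] using this
      have hτm : ∀ x, x ∈ P i ↔ τ x ∈ P j := by
        intro x
        rw [← hτi]; simp
      have hτs : ∀ x, x ∈ P j ↔ τ⁻¹ x ∈ P i := by
        intro x
        rw [hτm]; simp
      have hdij := Finset.disjoint_left.1 (hdisj i j hij)
      let g : V → V := fun x => if x ∈ P i then τ x else if x ∈ P j then τ⁻¹ x else x
      have hgi : ∀ x ∈ P i, g x = τ x := fun x hx => by simp [g, hx]
      have hgj : ∀ x ∈ P j, g x = τ⁻¹ x := fun x hx => by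
        have : x ∉ P i := fun h => hdij h hx
        simp [g, hx, this]
      have hgo : ∀ x, x ∉ P i → x ∉ P j → g x = x := fun x h h' => by simp [g, h, h']
      have hgg : Function.Involutive g := by
        intro x
        by_cases h1 : x ∈ P i
        · rw [hgi x h1, hgj _ ((hτm x).1 h1)]; simp
        · by_cases h2 : x ∈ P j
          · rw [hgj x h2, hgi _ ((hτs x).1 h2)]; simp
          · rw [hgo x h1 h2, hgo x h1 h2]
      let core := Z \ Finset.univ.biUnion P
      have hcore : ∀ x ∈ core, ∀ l, x ∉ P l := by
        intro x hx l h
        simp only [core, Finset.mem_sdiff, Finset.mem_biUnion, Finset.mem_univ, true_and] at hx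
        exact hx.2 ⟨l, h⟩
      have hgcore : ∀ x ∈ core, g x = x := fun x hx => hgo x (hcore x hx i) (hcore x hx j)
      -- one direction for a general pair
      have step : ∀ (p q : Fin k) (ρ : Equiv.Perm V), ρ ∈ afix G Z S →
          (∀ x ∈ P p, g x = ρ x) → (∀ x ∈ P p, g x ∈ P q) → ∀ a b, a ∈ P p → b ∈ core ∪ P p →
          J.Adj a b → J.Adj (g a) (g b) ∧ g a ∈ P q ∧ g b ∈ core ∪ P q := by
        intro p q ρ hρ hgρ hgq a b ha hb hab
        have hρ' := mem_afix.1 hρ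
        have ha' := hPsub p a ha
        have hbZ : b ∈ Z := by
          rcases Finset.mem_union.1 hb with hb | hb
          · exact (Finset.mem_sdiff.1 hb).1
          · exact (hPsub p b hb).2
        have hGab : G.Adj a b := ⟨hab, ha'.2, hbZ, fun h => ha'.1 (hWY h.1)⟩
        have hb2 : g b = ρ b := by
          rcases Finset.mem_union.1 hb with hb | hb
          · have hbY : b ∈ Y := by
              by_contra hbY
              exact hcore b hb p (hnb p a b ha hab hbZ hbY)
            rw [hgcore b hb, hρ'.2.2 b (hYS hbY)]
          · exact hgρ b hb
        refine ⟨?_, hgq a ha, ?_⟩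
        · rw [hgρ a ha, hb2]
          exact ((hρ'.2.1 a b).1 hGab).1
        · rcases Finset.mem_union.1 hb with hb | hb
          · rw [hgcore b hb]; exact Finset.mem_union_left _ hb
          · exact Finset.mem_union_right _ (hgq b hb)
      have step2 : ∀ (p q : Fin k) (ρ : Equiv.Perm V), ρ ∈ afix G Z S →
          (∀ x ∈ P p, g x = ρ x) → (∀ x ∈ P p, g x ∈ P q) → ∀ a b,
          s(a, b) ∈ rootedEdges J core (core ∪ P p) →
          s(g a, g b) ∈ rootedEdges J core (core ∪ P q) := by
        intro p q ρ hρ hgρ hgq a b h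
        rw [mem_rootedEdges] at h ⊢
        obtain ⟨h1, h2, h3, h4⟩ := h
        have hor : a ∈ P p ∨ b ∈ P p := by
          rw [Finset.mem_union] at h2 h3
          tauto
        rcases hor with ha | hb
        · obtain ⟨s1, s2, s3⟩ := step p q ρ hρ hgρ hgq a b ha h3 h1
          exact ⟨s1, Finset.mem_union_right _ s2, s3, fun h => hcore _ h.1 q s2⟩
        · obtain ⟨s1, s2, s3⟩ := step p q ρ hρ hgρ hgq b a hb h2 h1.symm
          exact ⟨s1.symm, s3, Finset.mem_union_right _ s2, fun h => hcore _ h.2 q s2⟩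
      have hgmi : ∀ x ∈ P i, g x ∈ P j := fun x hx => by rw [hgi x hx]; exact (hτm x).1 hx
      have hgmj : ∀ x ∈ P j, g x ∈ P i := fun x hx => by rw [hgj x hx]; exact (hτs x).1 hx
      refine ⟨hgg.toPerm g, ?_, ?_, ?_⟩
      · intro x hx
        exact hgcore x hx
      · rw [← hτi]
        exact Finset.image_congr fun x hx => hgi x hx
      · intro e
        induction e with
        | _ a b =>
          rw [Sym2.map_mk]
          change s(a, b) ∈ rootedEdges J core (core ∪ P i) ↔
            s(g a, g b) ∈ rootedEdges J core (core ∪ P j)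
          constructor
          · exact step2 i j τ hτ hgi hgmi a b
          · intro h
            have := step2 j i τ⁻¹ (afix_inv hτ) hgj hgmj _ _ h
            rwa [hgg a, hgg b] at this

end SunflowerAut

open SunflowerAut in
/-- Lemma 4.3: if `k ≥ 4 log₂ n`, `J[W,Z]` has no `k`-sunflower, and no vertex of
`Z \ W` is isolated in `J[W,Z]`, then `aut(W,Z) ≤ (16k)^{e(W,Z)}`. -/
theorem aut_bound_no_sunflower {n : ℕ} (J : SimpleGraph (Fin n)) (W Z : Finset (Fin n))
    (hWZ : W ⊂ Z) (k : ℕ) (hk : 4 * Real.logb 2 n ≤ k)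
    (hsun : ¬ ∃ P : Fin k → Finset (Fin n), IsSunflower J W Z P)
    (hiso : ∀ v ∈ Z \ W, ∃ e ∈ rootedEdges J W Z, v ∈ e) :
    autWZ J W Z ≤ (16 * k) ^ (eWZ J W Z) := by
  classical
  set G := rg J W Z with hG
  have hnpos : 1 ≤ n := by
    obtain ⟨x, -, -⟩ := Finset.exists_of_ssubset hWZ
    exact Nat.one_le_iff_ne_zero.2 (fun h => by subst h; exact x.elim0)
  have hk1 : 1 ≤ k := by
    by_contra h
    have : k = 0 := by omega
    subst this
    exact hsun ⟨fun i => i.elim0, fun i => i.elim0, fun i => i.elim0, fun i => i.elim0,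
      fun i => i.elim0⟩
  have hn4 : n ^ 4 ≤ 2 ^ k := by
    have hn0 : (0 : ℝ) < n := by exact_mod_cast hnpos
    have h : Real.logb 2 ((n : ℝ) ^ 4) ≤ k := by
      rw [Real.logb_pow]; exact_mod_cast hk
    rw [Real.logb_le_iff_le_rpow (by norm_num) (by positivity), Real.rpow_natCast] at h
    exact_mod_cast h
  have haut : autWZ J W Z = (afix G Z W).card := by
    rw [autWZ, Nat.card_eq_fintype_card, Fintype.card_subtype]
    congr 1
    ext σ
    rw [mem_afix]
    simp only [Finset.mem_filter, Finset.mem_univ, true_and]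
    constructor
    · rintro ⟨h1, h2, h3⟩
      refine ⟨h2, fun a b => ?_, h1⟩
      have := h3 s(a, b)
      rwa [Sym2.map_mk, mem_rootedEdges, mem_rootedEdges] at this
    · rintro ⟨h2, h3, h1⟩
      refine ⟨h1, h2, fun e => ?_⟩
      induction e with
      | _ a b => rw [Sym2.map_mk, mem_rootedEdges, mem_rootedEdges]; exact h3 a b
  have he : eWZ J W Z = G.edgeFinset.card := by
    rw [eWZ, ← edgeSet_rg, Nat.card_eq_fintype_card, ← Set.toFinset_card]
    rfl
  let T : Finset (Fin n) := (Z \ W).filter fun v => k ≤ 4 * (G.neighborFinset v).card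
  let Y := W ∪ T
  have hYZ : Y ⊆ Z := by
    intro x hx
    rcases Finset.mem_union.1 hx with hx | hx
    · exact hWZ.1 hx
    · exact (Finset.mem_sdiff.1 (Finset.mem_filter.1 hx).1).1
  have hWY : W ⊆ Y := Finset.subset_union_left
  have hlow : ∀ u, u ∉ Y → u ∈ Z → (G.neighborFinset u).card ≤ k := by
    intro u hu huZ
    simp only [Y, T, Finset.mem_union, Finset.mem_filter, Finset.mem_sdiff, not_or, not_and] at hu
    have := hu.2 ⟨huZ, hu.1⟩
    omega
  have hlowb := main_low (G := G) (Z := Z) (Y := Y) hk1 hlow (fun a b h => h.2.1)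
    (by
      intro v hv hvY
      obtain ⟨e, he, hve⟩ := hiso v (Finset.mem_sdiff.2 ⟨hv, fun h => hvY (hWY h)⟩)
      obtain ⟨x, rfl⟩ := Sym2.mem_iff_exists.1 hve
      exact ⟨x, (mem_rootedEdges J W Z v x).1 he⟩)
    (by
      intro S v hYS hvZ hvY
      by_contra hcon
      exact hsun (sunflower J hWY hYZ hYS hvZ hvY (le_of_lt (not_le.1 hcon))))
    _ Y le_rfl le_rfl (fun a ha b h => absurd ha h.2.1)
  have hhigh := main_high (G := G) (Z := Z) W T
  have hT : (Fintype.card (Fin n)) ^ T.card ≤ 4 ^ G.edgeFinset.card := by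
    rw [Fintype.card_fin, ← Finset.prod_const]
    have h1 : ∀ v ∈ T, n ≤ 2 ^ (G.degree v) := by
      intro v hv
      have h2 := (Finset.mem_filter.1 hv).2
      rw [SimpleGraph.card_neighborFinset_eq_degree] at h2
      have h3 : n ^ 4 ≤ (2 ^ G.degree v) ^ 4 := by
        rw [← pow_mul, mul_comm]
        exact hn4.trans (Nat.pow_le_pow_right (by norm_num) h2)
      exact (Nat.pow_le_pow_iff_left (by norm_num)).1 h3
    calc ∏ _v ∈ T, n ≤ ∏ v ∈ T, 2 ^ (G.degree v) := Finset.prod_le_prod' h1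
      _ = 2 ^ (∑ v ∈ T, G.degree v) := Finset.prod_pow_eq_pow_sum _ _ _
      _ ≤ 2 ^ (∑ v, G.degree v) := Nat.pow_le_pow_right (by norm_num)
          (Finset.sum_le_sum_of_subset (Finset.subset_univ _))
      _ = 4 ^ G.edgeFinset.card := by
          rw [SimpleGraph.sum_degrees_eq_twice_card_edges, pow_mul]
          norm_num
  have heY : eout G Y ≤ G.edgeFinset.card := by
    rw [eout]
    convert Finset.card_filter_le _ _
  rw [haut, he]
  calc (afix G Z W).card ≤ 4 ^ G.edgeFinset.card * (2 * k) ^ G.edgeFinset.card :=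
        hhigh.trans (Nat.mul_le_mul hT (hlowb.trans (Nat.pow_le_pow_right (by omega) heY)))
    _ = (8 * k) ^ G.edgeFinset.card := by rw [← mul_pow]; ring
    _ ≤ (16 * k) ^ G.edgeFinset.card := Nat.pow_le_pow_left (by omega) _
end

section
/- If J is r-leading at [W,Z] and (r/2)-sparse, then aut(W,Z) ≤ min{v(W,Z), 16 log₂ n}^{e(W,Z)}. -/
open SimpleGraph

open Classical in
/-- Edges inside `Z` meeting `X`. -/
noncomputable def edgesMeeting {n : ℕ} (J : SimpleGraph (Fin n)) (Z X : Finset (Fin n)) :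
    Finset (Sym2 (Fin n)) :=
  Finset.univ.filter (fun e => e ∈ J.edgeSet ∧ (∀ x ∈ e, x ∈ Z) ∧ ∃ x ∈ e, x ∈ X)

open Classical in
/-- Outer neighbourhood of `X` in `Z`. -/
noncomputable def outerNbr {n : ℕ} (J : SimpleGraph (Fin n)) (Z X : Finset (Fin n)) :
    Finset (Fin n) :=
  Z.filter (fun u => u ∉ X ∧ ∃ x ∈ X, J.Adj u x)

lemma mem_edgesMeeting {n : ℕ} {J : SimpleGraph (Fin n)} {Z X : Finset (Fin n)} {a b : Fin n} :
    s(a, b) ∈ edgesMeeting J Z X ↔ J.Adj a b ∧ (a ∈ Z ∧ b ∈ Z) ∧ (a ∈ X ∨ b ∈ X) := by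
  simp [edgesMeeting]

lemma mem_outerNbr {n : ℕ} {J : SimpleGraph (Fin n)} {Z X : Finset (Fin n)} {u : Fin n} :
    u ∈ outerNbr J Z X ↔ u ∈ Z ∧ u ∉ X ∧ ∃ x ∈ X, J.Adj u x := by
  simp [outerNbr]

lemma mem_rooted {n : ℕ} {J : SimpleGraph (Fin n)} {Z W : Finset (Fin n)} {a b : Fin n} :
    s(a, b) ∈ rootedEdges J W Z ↔ J.Adj a b ∧ (a ∈ Z ∧ b ∈ Z) ∧ (a ∉ W ∨ b ∉ W) := by
  simp [rootedEdges]
  tauto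

lemma eWZ_eq {n : ℕ} (J : SimpleGraph (Fin n)) (W Z : Finset (Fin n)) :
    eWZ J W Z = (edgesMeeting J Z (Z \ W)).card := by
  have : rootedEdges J W Z = (edgesMeeting J Z (Z \ W) : Set (Sym2 (Fin n))) := by
    ext e
    induction e using Sym2.ind with
    | _ a b =>
      rw [Finset.mem_coe, mem_rooted, mem_edgesMeeting]
      simp only [Finset.mem_sdiff]
      tauto
  unfold eWZ
  rw [this]
  simp

lemma edges_mono {n : ℕ} {J : SimpleGraph (Fin n)} {Z X Y : Finset (Fin n)} (h : X ⊆ Y) :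
    edgesMeeting J Z X ⊆ edgesMeeting J Z Y := by
  intro e
  induction e using Sym2.ind with
  | _ a b =>
    rw [mem_edgesMeeting, mem_edgesMeeting]
    rintro ⟨h1, h2, h3⟩
    exact ⟨h1, h2, h3.imp (fun t => h t) (fun t => h t)⟩

lemma edges_erase {n : ℕ} {J : SimpleGraph (Fin n)} {Z X : Finset (Fin n)} {x u : Fin n}
    (hX : X ⊆ Z) (hx : x ∈ X) (hu : u ∈ Z) (hu' : u ∉ X) (h : J.Adj u x) :
    (edgesMeeting J Z (X.erase x)).card + 1 ≤ (edgesMeeting J Z X).card := by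
  apply Finset.card_lt_card
  refine ⟨edges_mono (Finset.erase_subset _ _), fun hh => ?_⟩
  have := hh (mem_edgesMeeting.2 ⟨h, ⟨hu, hX hx⟩, Or.inr hx⟩)
  rw [mem_edgesMeeting] at this
  simp [hu'] at this

lemma card_le_edges {n : ℕ} {J : SimpleGraph (Fin n)} {Z D : Finset (Fin n)} (hD : D ⊆ Z)
    (hN : ∀ X ⊂ D, X.Nonempty → (outerNbr J Z X).Nonempty) :
    ∀ k, ∀ X ⊂ D, X.card = k → k ≤ (edgesMeeting J Z X).card := by
  intro k
  induction k with
  | zero => intros; exact Nat.zero_le _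
  | succ k ih =>
    intro X hX hk
    obtain ⟨u, hu⟩ := hN X hX (Finset.card_pos.1 (by omega))
    obtain ⟨h1, h2, x, hx, h3⟩ := mem_outerNbr.1 hu
    have := edges_erase (hX.1.trans hD) hx h1 h2 h3
    have h4 := ih (X.erase x) (lt_of_le_of_lt (Finset.erase_subset _ _) hX)
      (by rw [Finset.card_erase_of_mem hx]; omega)
    omega

open Classical in
lemma sum_deg_le {n : ℕ} {J : SimpleGraph (Fin n)} {Z X : Finset (Fin n)} (hX : X ⊆ Z) :
    ∑ u ∈ outerNbr J Z X, (X.filter (J.Adj u)).card ≤ (edgesMeeting J Z X).card := by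
  rw [← Finset.card_sigma]
  apply Finset.card_le_card_of_injOn (fun p => s(p.1, p.2))
  · rintro ⟨u, y⟩ h
    simp only [Finset.coe_sigma, Set.mem_sigma_iff, Finset.mem_coe, Finset.mem_filter,
      mem_outerNbr] at h
    exact mem_edgesMeeting.2 ⟨h.2.2, ⟨h.1.1, hX h.2.1⟩, Or.inr h.2.1⟩
  · rintro ⟨u, y⟩ h ⟨u', y'⟩ h' heq
    simp only [Finset.coe_sigma, Set.mem_sigma_iff, Finset.mem_coe, Finset.mem_filter,
      mem_outerNbr] at h h'
    simp only [Sym2.eq_iff] at heq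
    rcases heq with ⟨rfl, rfl⟩ | ⟨rfl, rfl⟩
    · rfl
    · exact absurd h'.2.1 h.1.2.1

/-- The automorphism group of `J[W,Z]`. -/
def autGroup {n : ℕ} (J : SimpleGraph (Fin n)) (W Z : Finset (Fin n)) :
    Subgroup (Equiv.Perm (Fin n)) where
  carrier := {σ | (∀ v ∈ W, σ v = v) ∧ (∀ v, v ∉ Z → σ v = v) ∧
     ∀ e, e ∈ rootedEdges J W Z ↔ Sym2.map σ e ∈ rootedEdges J W Z}
  one_mem' := by
    refine ⟨fun _ _ => rfl, fun _ _ => rfl, fun e => ?_⟩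
    induction e using Sym2.ind with
    | _ a b => simp
  mul_mem' := by
    rintro σ τ ⟨h1, h2, h3⟩ ⟨g1, g2, g3⟩
    refine ⟨fun v hv => ?_, fun v hv => ?_, fun e => ?_⟩
    · simp [g1 v hv, h1 v hv]
    · simp [g2 v hv, h2 v hv]
    · rw [g3 e, h3, Sym2.map_map]
      rfl
  inv_mem' := by
    rintro σ ⟨h1, h2, h3⟩
    refine ⟨fun v hv => ?_, fun v hv => ?_, fun e => ?_⟩
    · rw [Equiv.Perm.inv_eq_iff_eq, h1 v hv]
    · rw [Equiv.Perm.inv_eq_iff_eq, h2 v hv]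
    · rw [h3 (Sym2.map _ e), Sym2.map_map]
      have : (σ ∘ (σ⁻¹ : Equiv.Perm (Fin n))) = id := by
        funext x; simp
      rw [this, Sym2.map_id]
      rfl

lemma natCard_finset {α : Type} (s : Finset α) : Nat.card {x // x ∈ s} = s.card := by
  rw [Nat.card_eq_fintype_card, Fintype.card_coe]

lemma autWZ_eq {n : ℕ} (J : SimpleGraph (Fin n)) (W Z : Finset (Fin n)) :
    autWZ J W Z = Nat.card (autGroup J W Z) := rfl

lemma autWZ_pos {n : ℕ} (J : SimpleGraph (Fin n)) (W Z : Finset (Fin n)) :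
    0 < autWZ J W Z := by
  rw [autWZ_eq]; exact Nat.card_pos

lemma aut_fix {n : ℕ} {J : SimpleGraph (Fin n)} {W Z : Finset (Fin n)}
    {σ : Equiv.Perm (Fin n)} (h : σ ∈ autGroup J W Z) {v : Fin n} (hv : v ∉ Z \ W) : σ v = v := by
  by_cases hz : v ∈ Z
  · exact h.1 v (by simpa [hz] using hv)
  · exact h.2.1 v hz

lemma aut_mem {n : ℕ} {J : SimpleGraph (Fin n)} {W Z : Finset (Fin n)}
    {σ : Equiv.Perm (Fin n)} (h : σ ∈ autGroup J W Z) {v : Fin n} :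
    σ v ∈ Z \ W ↔ v ∈ Z \ W := by
  by_cases hv : v ∈ Z \ W
  · simp only [hv, iff_true]
    by_contra hc
    have := aut_fix h hc
    rw [σ.injective this] at hc
    exact hc hv
  · rw [aut_fix h hv]

lemma aut_le_factorial {n : ℕ} (J : SimpleGraph (Fin n)) (W Z : Finset (Fin n)) :
    autWZ J W Z ≤ (Z \ W).card.factorial := by
  rw [autWZ_eq]
  have : (Z \ W).card.factorial = Nat.card (Equiv.Perm {x // x ∈ Z \ W}) := by
    rw [Nat.card_perm, natCard_finset]
  rw [this]
  apply Nat.card_le_card_of_injective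
    (fun σ : autGroup J W Z => σ.1.subtypePerm (fun x => aut_mem σ.2))
  intro σ τ h
  apply Subtype.ext
  ext v
  by_cases hv : v ∈ Z \ W
  · have := congrArg (fun (f : Equiv.Perm {x // x ∈ Z \ W}) => ((f ⟨v, hv⟩ : {x // x ∈ Z \ W}) : Fin n)) h
    simp at this
    rw [this]
  · rw [aut_fix σ.2 hv, aut_fix τ.2 hv]

set_option maxHeartbeats 800000 in
lemma key {n : ℕ} {r : ℝ} (hr0 : 0 ≤ r) (J : SimpleGraph (Fin n)) (Z X : Finset (Fin n))
    (hX : X ⊆ Z) (hmu : mu n r J (Z \ X) Z < 1)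
    (hsparse : ExpSparse n (r / 2) (J.induce (Z : Set (Fin n)))) :
    (2 : ℝ) ^ (edgesMeeting J Z X).card < (n : ℝ) ^ (outerNbr J Z X).card := by
  have hZX : Z \ (Z \ X) = X := by simpa using hX
  have hapos : (0 : ℝ) < autWZ J (Z \ X) Z := by exact_mod_cast autWZ_pos _ _ _
  unfold mu at hmu
  rw [div_lt_one hapos, eWZ_eq, hZX] at hmu
  set N := outerNbr J Z X with hN
  set E := edgesMeeting J Z X with hE
  let I : (J.induce (Z : Set (Fin n))).Subgraph :=
    { verts := {a | (a : Fin n) ∈ X ∪ N}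
      Adj := fun a b => J.Adj a b ∧ ((a : Fin n) ∈ X ∨ (b : Fin n) ∈ X)
      adj_sub := fun h => h.1
      edge_vert := by
        rintro ⟨a, ha⟩ ⟨b, hb⟩ ⟨h1, h2⟩
        simp only [Set.mem_ofPred_eq, Finset.mem_union, hN, mem_outerNbr] at *
        by_cases hax : a ∈ X
        · exact Or.inl hax
        · exact Or.inr ⟨ha, hax, b, h2.resolve_left hax, h1⟩
      symm := ⟨fun a b h => ⟨h.1.symm, h.2.symm⟩⟩ }
  have hI := hsparse I
  have hv : Nat.card I.verts = X.card + N.card := by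
    have hd : Disjoint X N := by
      rw [Finset.disjoint_left]
      intro a ha hb
      exact (mem_outerNbr.1 hb).2.1 ha
    rw [← Finset.card_union_of_disjoint hd, ← natCard_finset]
    refine Nat.card_congr ⟨fun a => ⟨a.1.1, a.2⟩, fun a => ⟨⟨a.1, ?_⟩, a.2⟩, fun a => rfl, fun a => rfl⟩
    rcases Finset.mem_union.1 a.2 with h | h
    · exact hX h
    · exact (mem_outerNbr.1 h).1
  have he : Nat.card I.edgeSet = E.card := by
    rw [← natCard_finset]
    refine Nat.card_eq_of_bijective (fun e => ⟨Sym2.map Subtype.val e.1, ?_⟩) ⟨?_, ?_⟩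
    · obtain ⟨e, h⟩ := e
      induction e using Sym2.ind with
      | _ a b =>
        have h' : J.Adj a b ∧ ((a : Fin n) ∈ X ∨ (b : Fin n) ∈ X) := h
        exact mem_edgesMeeting.2 ⟨h'.1, ⟨a.2, b.2⟩, h'.2⟩
    · intro e f h
      apply Subtype.ext
      exact Sym2.map.injective Subtype.val_injective (congrArg Subtype.val h)
    · rintro ⟨e, h⟩
      induction e using Sym2.ind with
      | _ a b =>
        have h' := mem_edgesMeeting.1 h
        exact ⟨⟨s(⟨a, h'.2.1.1⟩, ⟨b, h'.2.1.2⟩), ⟨h'.1, h'.2.2⟩⟩, rfl⟩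
  have ha : autWZ J (Z \ X) Z ≤ Nat.card (I.coe ≃g I.coe) := by
    rw [autWZ_eq]
    haveI : Finite (I.coe ≃g I.coe) :=
      Finite.of_injective (fun f => f.toEquiv) (fun f g h => RelIso.toEquiv_injective h)
    have memX : ∀ σ : autGroup J (Z \ X) Z, ∀ v, σ.1 v ∈ X ↔ v ∈ X := by
      intro σ v
      have := aut_mem σ.2 (v := v)
      rwa [hZX] at this
    have fixX : ∀ σ : autGroup J (Z \ X) Z, ∀ v, v ∉ X → σ.1 v = v := by
      intro σ v hv
      exact aut_fix σ.2 (by rwa [hZX])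
    have memV : ∀ σ : autGroup J (Z \ X) Z, ∀ v, v ∈ X ∪ N → σ.1 v ∈ X ∪ N := by
      intro σ v hv
      by_cases h : v ∈ X
      · exact Finset.mem_union_left _ ((memX σ v).2 h)
      · rwa [fixX σ v h]
    have subV : ∀ v, v ∈ X ∪ N → v ∈ Z := by
      intro v hv
      rcases Finset.mem_union.1 hv with h | h
      · exact hX h
      · exact (mem_outerNbr.1 h).1
    let f : autGroup J (Z \ X) Z → I.verts → I.verts := fun σ a =>
      ⟨⟨σ.1 a.1.1, subV _ (memV σ _ a.2)⟩, memV σ _ a.2⟩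
    have finj : ∀ σ, Function.Injective (f σ) := by
      intro σ a b h
      have : σ.1 a.1.1 = σ.1 b.1.1 := congrArg (fun t : I.verts => t.1.1) h
      exact Subtype.ext (Subtype.ext (σ.1.injective this))
    let F : autGroup J (Z \ X) Z → (I.coe ≃g I.coe) := fun σ =>
      { toEquiv := Equiv.ofBijective (f σ) (Finite.injective_iff_bijective.1 (finj σ))
        map_rel_iff' := by
          intro a b
          have h3 := σ.2.2.2 s(a.1.1, b.1.1)
          rw [Sym2.map_mk, mem_rooted, mem_rooted] at h3
          have ha' := subV _ a.2
          have hb' := subV _ b.2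
          have ha2 := subV _ (memV σ _ a.2)
          have hb2 := subV _ (memV σ _ b.2)
          have m1 := memX σ a.1.1
          have m2 := memX σ b.1.1
          change (J.Adj (σ.1 a.1.1) (σ.1 b.1.1) ∧ (σ.1 a.1.1 ∈ X ∨ σ.1 b.1.1 ∈ X)) ↔
            (J.Adj a.1.1 b.1.1 ∧ (a.1.1 ∈ X ∨ b.1.1 ∈ X))
          simp only [Finset.mem_sdiff, ha', hb', ha2, hb2, true_and, not_not, and_self] at h3
          exact h3.symm }
    apply Nat.card_le_card_of_injective F
    intro σ τ h
    apply Subtype.ext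
    ext v
    by_cases hv : v ∈ X
    · have h1 : v ∈ X ∪ N := Finset.mem_union_left _ hv
      have := congrArg (fun g : I.coe ≃g I.coe => (g ⟨⟨v, hX hv⟩, h1⟩).1.1) h
      have h2 : σ.1 v = τ.1 v := this
      rw [h2]
    · rw [fixX σ v hv, fixX τ v hv]
  have hAI : (0 : ℝ) < Nat.card (I.coe ≃g I.coe) := by
    exact_mod_cast lt_of_lt_of_le (autWZ_pos _ _ _) ha
  rw [one_le_div hAI, hv, he] at hI
  have ha' : (autWZ J (Z \ X) Z : ℝ) ≤ Nat.card (I.coe ≃g I.coe) := by exact_mod_cast ha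
  have hdf : ((n.descFactorial (X.card + N.card) : ℕ) : ℝ) ≤ (n : ℝ) ^ (X.card + N.card) := by
    exact_mod_cast Nat.descFactorial_le_pow _ _
  have h5 : (n : ℝ) ^ X.card * r ^ E.card < (n : ℝ) ^ (X.card + N.card) * (r / 2) ^ E.card :=
    calc _ < _ := hmu
      _ ≤ _ := ha'
      _ ≤ _ := hI
      _ ≤ _ := by gcongr
  rw [pow_add, div_pow] at h5
  have h6 : 0 ≤ (n : ℝ) ^ X.card * r ^ E.card := by positivity
  have h7 : (n : ℝ) ^ X.card * (n : ℝ) ^ N.card * (r ^ E.card / 2 ^ E.card) =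
    ((n : ℝ) ^ X.card * r ^ E.card) * ((n : ℝ) ^ N.card / 2 ^ E.card) := by ring
  rw [h7] at h5
  have h8 : 1 < (n : ℝ) ^ N.card / 2 ^ E.card := by
    by_contra hc
    push Not at hc
    nlinarith
  rwa [one_lt_div (by positivity)] at h8

open Classical in
/-- Points moved by `H`. -/
noncomputable def movedSet {n : ℕ} (H : Subgroup (Equiv.Perm (Fin n))) : Finset (Fin n) :=
  Finset.univ.filter (fun v => ∃ σ ∈ H, σ v ≠ v)

lemma mem_moved {n : ℕ} {H : Subgroup (Equiv.Perm (Fin n))} {v : Fin n} :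
    v ∈ movedSet H ↔ ∃ σ ∈ H, σ v ≠ v := by
  simp [movedSet]

lemma moved_sub {n : ℕ} {J : SimpleGraph (Fin n)} {W Z : Finset (Fin n)}
    {H : Subgroup (Equiv.Perm (Fin n))} (hH : H ≤ autGroup J W Z) : movedSet H ⊆ Z \ W := by
  intro v hv
  obtain ⟨σ, hσ, h⟩ := mem_moved.1 hv
  by_contra hc
  exact h (aut_fix (hH hσ) hc)

lemma orbit_edges {n : ℕ} {J : SimpleGraph (Fin n)} {W Z : Finset (Fin n)}
    {H : Subgroup (Equiv.Perm (Fin n))} (hH : H ≤ autGroup J W Z) (m : ℝ)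
    (hm : ∀ x ∈ movedSet H, m ≤ Nat.card (MulAction.orbit H x)) :
    (outerNbr J Z (movedSet H)).card * m ≤ (edgesMeeting J Z (movedSet H)).card := by
  classical
  have hsub := moved_sub hH
  have h1 := sum_deg_le (J := J) (hsub.trans Finset.sdiff_subset)
  have h1' : ((∑ u ∈ outerNbr J Z (movedSet H),
    ((movedSet H).filter (J.Adj u)).card : ℕ) : ℝ) ≤ (edgesMeeting J Z (movedSet H)).card := by
    exact_mod_cast h1
  refine le_trans ?_ h1'
  push_cast
  rw [← nsmul_eq_mul]
  apply Finset.card_nsmul_le_sum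
  intro u hu
  obtain ⟨huZ, huX, x, hx, hadj⟩ := mem_outerNbr.1 hu
  refine (hm x hx).trans ?_
  have : Nat.card (MulAction.orbit H x) ≤ ((movedSet H).filter (J.Adj u)).card := by
    rw [← natCard_finset]
    refine Nat.card_le_card_of_injective
      (fun y : MulAction.orbit H x => ⟨y.1, ?_⟩) ?_
    · obtain ⟨y, ⟨⟨σ, hσ⟩, rfl⟩⟩ := y
      have hσu : σ u = u := by
        by_contra hc
        exact huX (mem_moved.2 ⟨σ, hσ, hc⟩)
      have hxZ := hsub hx
      rw [Finset.mem_sdiff] at hxZ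
      have h3 := ((hH hσ).2.2 s(u, x)).1 (mem_rooted.2 ⟨hadj, ⟨huZ, hxZ.1⟩, Or.inr hxZ.2⟩)
      rw [Sym2.map_mk, mem_rooted, hσu] at h3
      rw [Finset.mem_filter]
      refine ⟨?_, h3.1⟩
      change σ x ∈ _
      obtain ⟨τ, hτ, hne⟩ := mem_moved.1 hx
      refine mem_moved.2 ⟨σ * τ * σ⁻¹, H.mul_mem (H.mul_mem hσ hτ) (H.inv_mem hσ), ?_⟩
      simpa using hne
    · intro a b h
      apply Subtype.ext
      simpa using h
  exact_mod_cast this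

lemma stab_step {n : ℕ} (H : Subgroup (Equiv.Perm (Fin n))) (x : Fin n) (hx : x ∈ movedSet H) :
    ∃ K : Subgroup (Equiv.Perm (Fin n)), K ≤ H ∧ movedSet K ⊆ (movedSet H).erase x ∧
      Nat.card H = Nat.card (MulAction.orbit H x) * Nat.card K := by
  refine ⟨(MulAction.stabilizer H x).map H.subtype, ?_, ?_, ?_⟩
  · rintro _ ⟨σ, _, rfl⟩
    exact σ.2
  · intro v hv
    obtain ⟨_, ⟨σ, hσ, rfl⟩, hne⟩ := mem_moved.1 hv
    rw [Finset.mem_erase]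
    refine ⟨?_, mem_moved.2 ⟨_, σ.2, hne⟩⟩
    rintro rfl
    exact hne hσ
  · rw [Subgroup.card_map_of_injective H.subtype_injective]
    classical
    rw [← Nat.card_prod]
    exact (Nat.card_congr (MulAction.orbitProdStabilizerEquivGroup H x)).symm

lemma card_le_pow {n : ℕ} {J : SimpleGraph (Fin n)} {W Z : Finset (Fin n)} {L : ℝ} (hL : 1 ≤ L)
    (hstar : ∀ X ⊂ Z \ W, X.Nonempty →
      ((edgesMeeting J Z X).card : ℝ) < (outerNbr J Z X).card * L) :
    ∀ k, ∀ H : Subgroup (Equiv.Perm (Fin n)), H ≤ autGroup J W Z → movedSet H ⊂ Z \ W →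
      (movedSet H).card ≤ k → (Nat.card H : ℝ) ≤ L ^ k := by
  intro k
  induction k with
  | zero =>
    intro H hH hM hk
    have h0 : movedSet H = ∅ := Finset.card_eq_zero.1 (by omega)
    have : H = ⊥ := by
      rw [eq_bot_iff]
      intro σ hσ
      rw [Subgroup.mem_bot]
      ext v
      by_contra hc
      have : v ∈ movedSet H := mem_moved.2 ⟨σ, hσ, fun h => hc (by rw [h]; rfl)⟩
      simp [h0] at this
    simp [this]
  | succ k ih =>
    intro H hH hM hk
    by_cases hne : (movedSet H).Nonempty
    · have : ∃ x ∈ movedSet H, (Nat.card (MulAction.orbit H x) : ℝ) ≤ L := by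
        by_contra hc
        push Not at hc
        have := orbit_edges hH L (fun x hx => (hc x hx).le)
        exact absurd (hstar _ hM hne) (not_lt.2 this)
      obtain ⟨x, hx, hxL⟩ := this
      obtain ⟨K, hK, hKM, hc⟩ := stab_step H x hx
      have hKc := Finset.card_le_card hKM
      rw [Finset.card_erase_of_mem hx] at hKc
      have := ih K (hK.trans hH)
        (lt_of_le_of_lt (hKM.trans (Finset.erase_subset _ _)) hM) (by omega)
      rw [hc]
      push_cast
      rw [pow_succ']
      gcongr
    · have h0 : (movedSet H).card ≤ k := by
        rw [Finset.not_nonempty_iff_eq_empty.1 hne]; simp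
      exact (ih H hH hM h0).trans (pow_le_pow_right₀ hL (Nat.le_succ k))

lemma factorial_le_pow_pred (v : ℕ) (hv : 1 ≤ v) : v.factorial ≤ v ^ (v - 1) := by
  obtain ⟨k, rfl⟩ : ∃ k, v = k + 1 := ⟨v - 1, by omega⟩
  have := Nat.factorial_le_pow k
  rw [Nat.factorial_succ]
  rcases k with _ | k
  · simp
  · have h1 : (k + 1).factorial ≤ (k + 1) ^ k := by
      clear this hv
      induction k with
      | zero => simp
      | succ k ih =>
        rw [Nat.factorial_succ, pow_succ']
        gcongr
        exact ih.trans (Nat.pow_le_pow_left (by omega) _)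
    simp only [Nat.add_sub_cancel]
    rw [pow_succ']
    gcongr
    exact h1.trans (Nat.pow_le_pow_left (by omega) _)

/-- The second bound, with `L` in place of the logarithm. -/
lemma aut_le_log {n : ℕ} {J : SimpleGraph (Fin n)} {W Z : Finset (Fin n)} (hWZ : W ⊆ Z) {L : ℝ}
    (hL : 1 ≤ L) (hv : 2 ≤ (Z \ W).card)
    (hstar : ∀ X ⊂ Z \ W, X.Nonempty →
      ((edgesMeeting J Z X).card : ℝ) < (outerNbr J Z X).card * L) :
    (autWZ J W Z : ℝ) ≤ ((Z \ W).card : ℝ) ^ (edgesMeeting J Z (Z \ W)).card ∧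
    (autWZ J W Z : ℝ) ≤ (16 * L) ^ (edgesMeeting J Z (Z \ W)).card := by
  classical
  set D := Z \ W with hDdef
  have hDZ : D ⊆ Z := Finset.sdiff_subset
  have hN : ∀ X ⊂ D, X.Nonempty → (outerNbr J Z X).Nonempty := by
    intro X hX hne
    by_contra hc
    have := hstar X hX hne
    rw [Finset.not_nonempty_iff_eq_empty.1 hc] at this
    simp at this
    have h0 : (0 : ℝ) ≤ (edgesMeeting J Z X).card := by positivity
    linarith
  have hcard := card_le_edges hDZ hN
  have herase : ∀ z ∈ D, D.erase z ⊂ D := fun z hz => Finset.erase_ssubset hz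
  obtain ⟨z, hz⟩ : D.Nonempty := Finset.card_pos.1 (by omega)
  have he1 : D.card - 1 ≤ (edgesMeeting J Z D).card := by
    have := hcard _ (D.erase z) (herase z hz) rfl
    rw [Finset.card_erase_of_mem hz] at this
    exact this.trans (Finset.card_le_card (edges_mono (Finset.erase_subset _ _)))
  have hv1 : 1 ≤ D.card := by omega
  have hfirst : autWZ J W Z ≤ D.card ^ (edgesMeeting J Z D).card :=
    (aut_le_factorial J W Z).trans ((factorial_le_pow_pred D.card hv1).trans
      (Nat.pow_le_pow_right hv1 he1))
  have hfirst' : (autWZ J W Z : ℝ) ≤ (D.card : ℝ) ^ (edgesMeeting J Z D).card := by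
    exact_mod_cast hfirst
  refine ⟨hfirst', ?_⟩
  have hne : (D.erase z).Nonempty := by
    rw [← Finset.card_pos, Finset.card_erase_of_mem hz]; omega
  have hEz : (edgesMeeting J Z D).card ≤
      (edgesMeeting J Z (D.erase z)).card + (outerNbr J Z D).card := by
    have : edgesMeeting J Z D ⊆ edgesMeeting J Z (D.erase z) ∪
        (outerNbr J Z D).image (fun w => s(z, w)) := by
      intro e
      induction e using Sym2.ind with
      | _ a b =>
        rw [Finset.mem_union, mem_edgesMeeting, mem_edgesMeeting, Finset.mem_image]
        rintro ⟨h1, h2, h3⟩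
        by_cases h4 : a ∈ D.erase z ∨ b ∈ D.erase z
        · exact Or.inl ⟨h1, h2, h4⟩
        · right
          simp only [Finset.mem_erase, not_or, not_and_or, not_not] at h4
          rcases h3 with h | h
          · have haz : a = z := h4.1.resolve_right (fun t => t h)
            refine ⟨b, mem_outerNbr.2 ⟨h2.2, ?_, a, h, h1.symm⟩, by rw [haz]⟩
            rcases h4.2 with h5 | h5
            · exact absurd h1 (by rw [haz, h5]; exact J.irrefl)
            · exact h5
          · have hbz : b = z := h4.2.resolve_right (fun t => t h)
            refine ⟨a, mem_outerNbr.2 ⟨h2.1, ?_, b, h, h1⟩, by rw [hbz, Sym2.eq_swap]⟩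
            rcases h4.1 with h5 | h5
            · exact absurd h1 (by rw [hbz, h5]; exact J.irrefl)
            · exact h5
    refine (Finset.card_le_card this).trans ((Finset.card_union_le _ _).trans ?_)
    gcongr
    exact Finset.card_image_le
  have hNz : (outerNbr J Z (D.erase z)).card ≤ (outerNbr J Z D).card + 1 := by
    refine (Finset.card_le_card (t := insert z (outerNbr J Z D)) ?_).trans
      (Finset.card_insert_le _ _)
    intro u hu
    obtain ⟨h1, h2, x, hx, h3⟩ := mem_outerNbr.1 hu
    rw [Finset.mem_insert]
    by_cases huz : u = z
    · exact Or.inl huz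
    · right
      refine mem_outerNbr.2 ⟨h1, fun h => h2 (Finset.mem_erase.2 ⟨huz, h⟩), x,
        Finset.mem_of_mem_erase hx, h3⟩
  have hs := hstar _ (herase z hz) hne
  have hEz' : ((edgesMeeting J Z D).card : ℝ) ≤
      (edgesMeeting J Z (D.erase z)).card + (outerNbr J Z D).card := by exact_mod_cast hEz
  have hNz' : ((outerNbr J Z (D.erase z)).card : ℝ) ≤ (outerNbr J Z D).card + 1 := by
    exact_mod_cast hNz
  by_cases hW : (outerNbr J Z D).Nonempty
  · have he2 : D.card ≤ (edgesMeeting J Z D).card := by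
      obtain ⟨u, hu⟩ := hW
      obtain ⟨h1, h2, x, hx, h3⟩ := mem_outerNbr.1 hu
      have := edges_erase hDZ hx h1 h2 h3
      have h4 := hcard _ (D.erase x) (herase x hx) rfl
      rw [Finset.card_erase_of_mem hx] at h4
      omega
    have hfin : (autWZ J W Z : ℝ) ≤ (16 * L) ^ D.card := by
      rw [autWZ_eq]
      by_cases hM : movedSet (autGroup J W Z) = D
      · have : ∃ x ∈ D, (Nat.card (MulAction.orbit (autGroup J W Z) x) : ℝ) ≤ 16 * L := by
          by_contra hc
          push Not at hc
          have h1 := orbit_edges (le_refl (autGroup J W Z)) (16 * L)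
            (fun x hx => (hc x (hM ▸ hx)).le)
          rw [hM] at h1
          have h2 : (1 : ℝ) ≤ (outerNbr J Z D).card := by
            exact_mod_cast Finset.card_pos.2 hW
          have h3 : ((outerNbr J Z (D.erase z)).card : ℝ) * L ≤ ((outerNbr J Z D).card + 1) * L := by
            gcongr
          nlinarith
        obtain ⟨x, hx, hxL⟩ := this
        obtain ⟨K, hK, hKM, hc⟩ := stab_step (autGroup J W Z) x (hM ▸ hx)
        rw [hM] at hKM
        have hKc := Finset.card_le_card hKM
        rw [Finset.card_erase_of_mem hx] at hKc
        have h5 := card_le_pow hL hstar (D.card - 1) K hK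
          (lt_of_le_of_lt hKM (herase x hx)) hKc
        have h6 : L ^ (D.card - 1) ≤ (16 * L) ^ (D.card - 1) := by
          gcongr; linarith
        rw [hc]
        push_cast
        have h7 : D.card = (D.card - 1) + 1 := by omega
        rw [h7, pow_succ']
        gcongr
        exact h5.trans h6
      · have hsub := moved_sub (le_refl (autGroup J W Z))
        have h5 := card_le_pow hL hstar D.card (autGroup J W Z) le_rfl
          (lt_of_le_of_ne hsub hM) (Finset.card_le_card hsub)
        refine h5.trans ?_
        gcongr; linarith
    exact hfin.trans (pow_le_pow_right₀ (by linarith) he2)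
  · rw [Finset.not_nonempty_iff_eq_empty.1 hW] at hEz' hNz'
    simp at hEz' hNz'
    have h1 : ((outerNbr J Z (D.erase z)).card : ℝ) * L ≤ 1 * L := by
      gcongr
      exact_mod_cast hNz'
    have h2 : (D.card : ℝ) ≤ (edgesMeeting J Z D).card + 1 := by
      exact_mod_cast (by omega : D.card ≤ (edgesMeeting J Z D).card + 1)
    have h0 : ((edgesMeeting J Z D).card : ℝ) ≤ (edgesMeeting J Z (D.erase z)).card := by
      exact_mod_cast hEz'
    refine hfirst'.trans ?_
    gcongr
    linarith

/-- Corollary 4.4: if `J[W,Z]` is `r`-leading and `J[Z]` is `(r/2)`-sparse, then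
`aut(W,Z) ≤ min{v(W,Z), 16 log₂ n}^{e(W,Z)}`. -/
theorem aut_le_min_pow {n : ℕ} {r : ℝ} (hr0 : 0 ≤ r) (hr1 : r ≤ 1)
    (J : SimpleGraph (Fin n)) (W Z : Finset (Fin n)) (hWZ : W ⊆ Z)
    (hlead : Leading n r J W Z)
    (hsparse : ExpSparse n (r / 2) (J.induce (Z : Set (Fin n)))) :
    (autWZ J W Z : ℝ) ≤
      (min (((Z \ W).card : ℝ)) (16 * Real.logb 2 n)) ^ (eWZ J W Z) := by
  rw [eWZ_eq]
  by_cases hv : 2 ≤ (Z \ W).card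
  · have hn : 2 ≤ n := by
      have := Finset.card_le_univ (Z \ W)
      simp at this
      omega
    have hL : 1 ≤ Real.logb 2 n := by
      rw [Real.le_logb_iff_rpow_le (by norm_num) (by positivity)]
      simpa using (by exact_mod_cast hn : (2 : ℝ) ≤ n)
    have hstar : ∀ X ⊂ Z \ W, X.Nonempty →
        ((edgesMeeting J Z X).card : ℝ) < (outerNbr J Z X).card * Real.logb 2 n := by
      intro X hX hne
      have hXZ : X ⊆ Z := hX.1.trans Finset.sdiff_subset
      have hmu : mu n r J (Z \ X) Z < 1 := by
        apply hlead
        · refine ⟨fun w hw => Finset.mem_sdiff.2 ⟨hWZ hw, fun h => ?_⟩, fun hh => hX.2 ?_⟩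
          · exact (Finset.mem_sdiff.1 (hX.1 h)).2 hw
          · intro y hy
            rw [Finset.mem_sdiff] at hy
            by_contra hc
            exact hy.2 (hh (Finset.mem_sdiff.2 ⟨hy.1, hc⟩))
        · exact Finset.sdiff_ssubset hXZ hne
      have h := key hr0 J Z X hXZ hmu hsparse
      have h2 := Real.logb_lt_logb (b := 2) (by norm_num) (by positivity) h
      rw [Real.logb_pow, Real.logb_pow] at h2
      simpa using h2
    obtain ⟨h1, h2⟩ := aut_le_log hWZ hL hv hstar
    rcases min_choice (((Z \ W).card : ℝ)) (16 * Real.logb 2 n) with h | h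
    · rwa [h]
    · rwa [h]
  · have h1 : (autWZ J W Z : ℝ) ≤ 1 := by
      have := aut_le_factorial J W Z
      have h2 : (Z \ W).card.factorial = 1 := by
        rw [Nat.factorial_eq_one]; omega
      rw [h2] at this
      exact_mod_cast this
    refine h1.trans ?_
    by_cases he : (edgesMeeting J Z (Z \ W)) = ∅
    · simp [he]
    · obtain ⟨e, he⟩ := Finset.nonempty_iff_ne_empty.2 he
      induction e using Sym2.ind with
      | _ a b =>
        obtain ⟨h3, h4, h5⟩ := mem_edgesMeeting.1 he
        have hc : 1 ≤ (Z \ W).card := by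
          rcases h5 with h | h
          · exact Finset.card_pos.2 ⟨_, h⟩
          · exact Finset.card_pos.2 ⟨_, h⟩
        have hn : 2 ≤ n := by
          have := h3.ne
          have ha := a.2
          have hb := b.2
          have : a.1 ≠ b.1 := fun h => this (Fin.ext h)
          omega
        have hL : 1 ≤ Real.logb 2 n := by
          rw [Real.le_logb_iff_rpow_le (by norm_num) (by positivity)]
          simpa using (by exact_mod_cast hn : (2 : ℝ) ≤ n)
        apply one_le_pow₀
        apply le_min
        · exact_mod_cast hc
        · linarith
end
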